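/- Let G^i be a spray with coefficients N^i_j and let F̃ : Ω → ℝ be smooth, positive and positively 1-homogeneous in y. Assume that ∇(∂²F̃/∂y^i∂y^j) = S(∂²F̃/∂y^i∂y^j) − Σ_k (N^k_i ∂²F̃/∂y^k∂y^j + N^k_j ∂²F̃/∂y^i∂y^k) = 0 on Ω for all i, j. Define ω_{kj} = δ/δx^k(∂F̃/∂y^j) − δ/δx^j(∂F̃/∂y^k) on Ω. Then ∂ω_{kj}/∂y^i = 0 on Ω for all i, j, k; that is, each ω_{kj} has vanishing fibre derivatives (it is a basic function of x along each fibre). -/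

import Mathlib

noncomputable section

/-- A point `(x, y)` of the tangent space coordinates over `ℝⁿ`. -/
abbrev Pt (n : ℕ) : Type := (Fin n → ℝ) × (Fin n → ℝ)

/-- `Ω = U × (ℝⁿ \ {0})`. -/
def OmegaSet {n : ℕ} (U : Set (Fin n → ℝ)) : Set (Pt n) :=
  {p : Pt n | p.1 ∈ U ∧ p.2 ≠ 0}

/-- Partial derivative `∂f/∂x^i`. -/
def pdx {n : ℕ} (f : Pt n → ℝ) (i : Fin n) (p : Pt n) : ℝ :=
  fderiv ℝ f p (Pi.single i 1, 0)

/-- Partial derivative `∂f/∂y^i`. -/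
def pdy {n : ℕ} (f : Pt n → ℝ) (i : Fin n) (p : Pt n) : ℝ :=
  fderiv ℝ f p (0, Pi.single i 1)

/-- Second fibre derivative `∂²f/∂y^i∂y^j`. -/
def pdyy {n : ℕ} (f : Pt n → ℝ) (i j : Fin n) : Pt n → ℝ :=
  pdy (pdy f j) i

/-- The spray vector field applied to a function:
`S(f) = Σ_k (y^k ∂f/∂x^k − 2 G^k ∂f/∂y^k)`. -/
def Sop {n : ℕ} (G : Fin n → Pt n → ℝ) (f : Pt n → ℝ) (p : Pt n) : ℝ :=
  ∑ k, (p.2 k * pdx f k p - 2 * G k p * pdy f k p)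

/-- Connection coefficients `N^i_j = ∂G^i/∂y^j`. -/
def Ncoef {n : ℕ} (G : Fin n → Pt n → ℝ) (i j : Fin n) : Pt n → ℝ :=
  pdy (G i) j

/-- Horizontal derivative `δf/δx^i = ∂f/∂x^i − Σ_j N^j_i ∂f/∂y^j`. -/
def deltax {n : ℕ} (G : Fin n → Pt n → ℝ) (f : Pt n → ℝ) (i : Fin n) (p : Pt n) : ℝ :=
  pdx f i p - ∑ j, Ncoef G j i p * pdy f j p

/-- Dynamical covariant derivative of a `(0,2)` family:
`∇T_{ij} = S(T_{ij}) − Σ_k (N^k_i T_{kj} + N^k_j T_{ik})`. -/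
def nablaT {n : ℕ} (G : Fin n → Pt n → ℝ) (T : Fin n → Fin n → Pt n → ℝ)
    (i j : Fin n) (p : Pt n) : ℝ :=
  Sop G (T i j) p - ∑ k, (Ncoef G k i p * T k j p + Ncoef G k j p * T i k p)

/-- `f` is positively `k`-homogeneous in the fibre variable `y`, on `Ω`. -/
def PosHomog {n : ℕ} (U : Set (Fin n → ℝ)) (k : ℤ) (f : Pt n → ℝ) : Prop :=
  ∀ L : ℝ, 0 < L → ∀ p ∈ OmegaSet U, f (p.1, L • p.2) = L ^ k * f p

/-- A spray: smooth, positively 2-homogeneous coefficients `G^i`. -/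
def IsSpray {n : ℕ} (U : Set (Fin n → ℝ)) (G : Fin n → Pt n → ℝ) : Prop :=
  ∀ i, ContDiffOn ℝ (⊤ : ℕ∞) (G i) (OmegaSet U) ∧ PosHomog U 2 (G i)

/-- Components of the Euler-Lagrange 1-form: `(δ_S f)_i = S(∂f/∂y^i) − ∂f/∂x^i`. -/
def EL {n : ℕ} (G : Fin n → Pt n → ℝ) (f : Pt n → ℝ) (i : Fin n) (p : Pt n) : ℝ :=
  Sop G (pdy f i) p - pdx f i p

/-- The metric tensor `g_{ij} = ½ ∂²(F²)/∂y^i∂y^j` of a Finsler function. -/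
def metricTensor {n : ℕ} (F : Pt n → ℝ) (i j : Fin n) (p : Pt n) : ℝ :=
  (1 / 2) * pdyy (fun q => F q ^ 2) i j p

/-- A Finsler structure on `U`: smooth, positive, positively 1-homogeneous,
with invertible metric tensor at every point of `Ω`. -/
def IsFinsler {n : ℕ} (U : Set (Fin n → ℝ)) (F : Pt n → ℝ) : Prop :=
  ContDiffOn ℝ (⊤ : ℕ∞) F (OmegaSet U) ∧ (∀ p ∈ OmegaSet U, 0 < F p) ∧ PosHomog U 1 F ∧
    ∀ p ∈ OmegaSet U, IsUnit (Matrix.of (fun i j => metricTensor F i j p))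

section helpers
variable {n : ℕ} {U : Set (Fin n → ℝ)}

theorem omega_open (hU : IsOpen U) : IsOpen (OmegaSet U) :=
  (hU.preimage continuous_fst).inter (isOpen_ne.preimage continuous_snd)

theorem sm_dir {s : Set (Pt n)} (hs : IsOpen s) {f : Pt n → ℝ}
    (hf : ContDiffOn ℝ (⊤ : ℕ∞) f s) (v : Pt n) :
    ContDiffOn ℝ (⊤ : ℕ∞) (fun p => fderiv ℝ f p v) s :=
  (hf.fderiv_of_isOpen hs (by simp)).clm_apply contDiffOn_const

theorem sm_diff {s : Set (Pt n)} (hs : IsOpen s) {f : Pt n → ℝ}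
    (hf : ContDiffOn ℝ (⊤ : ℕ∞) f s) {p : Pt n} (hp : p ∈ s) : DifferentiableAt ℝ f p :=
  (hf.contDiffAt (hs.mem_nhds hp)).differentiableAt (by simp)

theorem dir_comm {s : Set (Pt n)} (hs : IsOpen s) {f : Pt n → ℝ}
    (hf : ContDiffOn ℝ (⊤ : ℕ∞) f s) (v w : Pt n) {p : Pt n} (hp : p ∈ s) :
    fderiv ℝ (fun q => fderiv ℝ f q v) p w = fderiv ℝ (fun q => fderiv ℝ f q w) p v := by
  have h1 : DifferentiableAt ℝ (fderiv ℝ f) p :=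
    ((hf.fderiv_of_isOpen hs (m := 1) (by norm_cast)).contDiffAt
      (hs.mem_nhds hp)).differentiableAt (by simp)
  have h2 := (hf.contDiffAt (hs.mem_nhds hp)).isSymmSndFDerivAt (by simp; norm_cast)
  rw [fderiv_clm_apply h1 (by fun_prop), fderiv_clm_apply h1 (by fun_prop)]
  simpa using h2 w v

theorem dir_congr {s : Set (Pt n)} (hs : IsOpen s) {f g : Pt n → ℝ}
    (h : ∀ p ∈ s, f p = g p) (v : Pt n) {p : Pt n} (hp : p ∈ s) :
    fderiv ℝ f p v = fderiv ℝ g p v := by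
  have : f =ᶠ[nhds p] g := by
    filter_upwards [hs.mem_nhds hp] with q hq using h q hq
  rw [this.fderiv_eq]

theorem pdy_mul {f g : Pt n → ℝ} {p : Pt n} (hf : DifferentiableAt ℝ f p)
    (hg : DifferentiableAt ℝ g p) (i : Fin n) :
    pdy (fun q => f q * g q) i p = pdy f i p * g p + f p * pdy g i p := by
  unfold pdy
  rw [fderiv_fun_mul hf hg]; simp; ring

theorem pdy_add {f g : Pt n → ℝ} {p : Pt n} (hf : DifferentiableAt ℝ f p)
    (hg : DifferentiableAt ℝ g p) (i : Fin n) :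
    pdy (fun q => f q + g q) i p = pdy f i p + pdy g i p := by
  unfold pdy
  rw [fderiv_fun_add hf hg]; simp

theorem pdy_sub {f g : Pt n → ℝ} {p : Pt n} (hf : DifferentiableAt ℝ f p)
    (hg : DifferentiableAt ℝ g p) (i : Fin n) :
    pdy (fun q => f q - g q) i p = pdy f i p - pdy g i p := by
  unfold pdy
  rw [fderiv_fun_sub hf hg]; simp

theorem pdy_sum {f : Fin n → Pt n → ℝ} {p : Pt n} (hf : ∀ l, DifferentiableAt ℝ (f l) p)
    (i : Fin n) :
    pdy (fun q => ∑ l, f l q) i p = ∑ l, pdy (f l) i p := by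
  unfold pdy
  rw [fderiv_fun_sum (fun l _ => hf l)]; simp

theorem pdy_const (c : ℝ) (i : Fin n) (p : Pt n) : pdy (fun _ => c) i p = 0 := by
  simp [pdy]

theorem diff_coord (l : Fin n) (p : Pt n) : DifferentiableAt ℝ (fun q : Pt n => q.2 l) p := by
  fun_prop

theorem pdy_coord (l k : Fin n) (p : Pt n) :
    pdy (fun q : Pt n => q.2 l) k p = if l = k then 1 else 0 := by
  let L : Pt n →L[ℝ] ℝ := (ContinuousLinearMap.proj l).comp (ContinuousLinearMap.snd ℝ _ _)
  have : fderiv ℝ (fun q : Pt n => q.2 l) p = L := L.fderiv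
  unfold pdy
  rw [this]
  simp [L, Pi.single_apply]

/-- the fibre derivative of `nablaT` -/
theorem pdy_nabla {s : Set (Pt n)} (hs : IsOpen s) {G : Fin n → Pt n → ℝ}
    (hG : ∀ i, ContDiffOn ℝ (⊤ : ℕ∞) (G i) s) {T : Fin n → Fin n → Pt n → ℝ}
    (hT : ∀ i j, ContDiffOn ℝ (⊤ : ℕ∞) (T i j) s) (i j k : Fin n) {p : Pt n} (hp : p ∈ s) :
    pdy (nablaT G T i j) k p = pdx (T i j) k p +
      ∑ l, (p.2 l * pdy (pdx (T i j) l) k p - 2 * Ncoef G l k p * pdy (T i j) l p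
        - 2 * G l p * pdy (pdy (T i j) l) k p
        - pdy (Ncoef G l i) k p * T l j p - Ncoef G l i p * pdy (T l j) k p
        - pdy (Ncoef G l j) k p * T i l p - Ncoef G l j p * pdy (T i l) k p) := by
  have dG : ∀ l, DifferentiableAt ℝ (G l) p := fun l => sm_diff hs (hG l) hp
  have dN : ∀ l m, DifferentiableAt ℝ (Ncoef G l m) p :=
    fun l m => sm_diff hs (sm_dir hs (hG l) _) hp
  have dT : ∀ l m, DifferentiableAt ℝ (T l m) p := fun l m => sm_diff hs (hT l m) hp
  have dx : ∀ l m a, DifferentiableAt ℝ (pdx (T l m) a) p :=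
    fun l m a => sm_diff hs (sm_dir hs (hT l m) _) hp
  have dy : ∀ l m a, DifferentiableAt ℝ (pdy (T l m) a) p :=
    fun l m a => sm_diff hs (sm_dir hs (hT l m) _) hp
  have dc : ∀ l, DifferentiableAt ℝ (fun q : Pt n => q.2 l) p := fun l => diff_coord l p
  have d1 : ∀ l, DifferentiableAt ℝ (fun q : Pt n => q.2 l * pdx (T i j) l q) p :=
    fun l => (dc l).mul (dx i j l)
  have d20 : ∀ l, DifferentiableAt ℝ (fun q : Pt n => 2 * G l q) p :=
    fun l => (dG l).const_mul 2
  have d2 : ∀ l, DifferentiableAt ℝ (fun q : Pt n => 2 * G l q * pdy (T i j) l q) p :=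
    fun l => (d20 l).mul (dy i j l)
  have d3 : ∀ l, DifferentiableAt ℝ (fun q : Pt n => Ncoef G l i q * T l j q) p :=
    fun l => (dN l i).mul (dT l j)
  have d4 : ∀ l, DifferentiableAt ℝ (fun q : Pt n => Ncoef G l j q * T i l q) p :=
    fun l => (dN l j).mul (dT i l)
  have e : nablaT G T i j = fun q => (∑ l, (q.2 l * pdx (T i j) l q
      - 2 * G l q * pdy (T i j) l q))
      - ∑ l, (Ncoef G l i q * T l j q + Ncoef G l j q * T i l q) := rfl
  rw [e, pdy_sub (DifferentiableAt.fun_sum fun l _ => (d1 l).fun_sub (d2 l))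
    (DifferentiableAt.fun_sum fun l _ => (d3 l).fun_add (d4 l)),
    pdy_sum (fun l => (d1 l).fun_sub (d2 l)), pdy_sum (fun l => (d3 l).fun_add (d4 l))]
  have e1 : pdx (T i j) k p = ∑ l, (if l = k then 1 else 0) * pdx (T i j) l p := by simp
  rw [e1, ← Finset.sum_sub_distrib, ← Finset.sum_add_distrib]
  refine Finset.sum_congr rfl fun l _ => ?_
  rw [pdy_sub (d1 l) (d2 l), pdy_add (d3 l) (d4 l), pdy_mul (dc l) (dx i j l),
    pdy_mul (d20 l) (dy i j l), pdy_mul (dN l i) (dT l j), pdy_mul (dN l j) (dT i l),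
    pdy_mul (differentiableAt_const 2) (dG l), pdy_const, pdy_coord]
  change _ = _ + (_ - 2 * pdy (G l) k p * _ - _ - _ - _ - _ - _)
  ring

theorem pdy_deltax {s : Set (Pt n)} (hs : IsOpen s) {G : Fin n → Pt n → ℝ}
    (hG : ∀ i, ContDiffOn ℝ (⊤ : ℕ∞) (G i) s) {f : Pt n → ℝ}
    (hf : ContDiffOn ℝ (⊤ : ℕ∞) f s) (i k : Fin n) {p : Pt n} (hp : p ∈ s) :
    DifferentiableAt ℝ (deltax G f k) p ∧
    pdy (deltax G f k) i p = pdx (pdy f i) k p -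
      ∑ l, (pdy (Ncoef G l k) i p * pdy f l p + Ncoef G l k p * pdy (pdy f l) i p) := by
  have dN : ∀ l m, DifferentiableAt ℝ (Ncoef G l m) p :=
    fun l m => sm_diff hs (sm_dir hs (hG l) _) hp
  have dx : ∀ a, DifferentiableAt ℝ (pdx f a) p :=
    fun a => sm_diff hs (sm_dir hs hf _) hp
  have dy : ∀ a, DifferentiableAt ℝ (pdy f a) p :=
    fun a => sm_diff hs (sm_dir hs hf _) hp
  have d1 : ∀ l, DifferentiableAt ℝ (fun q : Pt n => Ncoef G l k q * pdy f l q) p :=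
    fun l => (dN l k).mul (dy l)
  have d2 : DifferentiableAt ℝ (fun q : Pt n => ∑ l, Ncoef G l k q * pdy f l q) p :=
    DifferentiableAt.fun_sum fun l _ => d1 l
  have e : deltax G f k = fun q => pdx f k q - ∑ l, Ncoef G l k q * pdy f l q := rfl
  refine ⟨(dx k).sub d2, ?_⟩
  rw [e, pdy_sub (dx k) d2, pdy_sum d1]
  congr 1
  · exact dir_comm hs hf _ _ hp
  · exact Finset.sum_congr rfl fun l _ => pdy_mul (dN l k) (dy l) i

end helpers

/-- if `∇(∂²F̃/∂y^i∂y^j) = 0` on `Ω`, then the functions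
`ω_{kj} = δ/δx^k(∂F̃/∂y^j) − δ/δx^j(∂F̃/∂y^k)` have vanishing fibre derivatives on `Ω`. -/
theorem statement10 {n : ℕ} (hn : 1 ≤ n) (U : Set (Fin n → ℝ)) (hU : IsOpen U)
    (G : Fin n → Pt n → ℝ) (hG : IsSpray U G)
    (Ft : Pt n → ℝ) (hFs : ContDiffOn ℝ (⊤ : ℕ∞) Ft (OmegaSet U))
    (hFpos : ∀ p ∈ OmegaSet U, 0 < Ft p) (hFh : PosHomog U 1 Ft)
    (h : ∀ i j, ∀ p ∈ OmegaSet U, nablaT G (pdyy Ft) i j p = 0) :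
    ∀ i j k, ∀ p ∈ OmegaSet U,
      pdy (fun q => deltax G (pdy Ft j) k q - deltax G (pdy Ft k) j q) i p = 0 := by
  intro i j k p hp
  have hs := omega_open hU
  set s := OmegaSet U with hsdef
  have hGs : ∀ i, ContDiffOn ℝ (⊤ : ℕ∞) (G i) s := fun i => (hG i).1
  have hF1 : ∀ a, ContDiffOn ℝ (⊤ : ℕ∞) (pdy Ft a) s := fun a => sm_dir hs hFs _
  have hF2 : ∀ a b, ContDiffOn ℝ (⊤ : ℕ∞) (pdyy Ft a b) s := fun a b => sm_dir hs (hF1 b) _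
  have hF3 : ∀ a b c, ContDiffOn ℝ (⊤ : ℕ∞) (pdy (pdyy Ft a b) c) s :=
    fun a b c => sm_dir hs (hF2 a b) _
  -- symmetries
  have s2 : ∀ a b, ∀ q ∈ s, pdyy Ft a b q = pdyy Ft b a q :=
    fun a b q hq => dir_comm hs hFs _ _ hq
  have s3 : ∀ a b c, ∀ q ∈ s, pdy (pdyy Ft a b) c q = pdy (pdyy Ft c b) a q :=
    fun a b c q hq => dir_comm hs (hF1 b) _ _ hq
  have s3' : ∀ a b c, ∀ q ∈ s, pdy (pdyy Ft a b) c q = pdy (pdyy Ft b a) c q :=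
    fun a b c q hq => dir_congr hs (s2 a b) _ hq
  have s3'' : ∀ a b c, ∀ q ∈ s, pdy (pdyy Ft a b) c q = pdy (pdyy Ft a c) b q :=
    fun a b c q hq => by rw [s3' a b c q hq, s3 b a c q hq, s3' c a b q hq]
  have sN : ∀ l a b, pdy (Ncoef G l a) b p = pdy (Ncoef G l b) a p :=
    fun l a b => dir_comm hs (hGs l) _ _ hp
  have sx : ∀ l, pdy (pdx (pdyy Ft i j) l) k p = pdy (pdx (pdyy Ft i k) l) j p := by
    intro l
    have e1 : pdy (pdx (pdyy Ft i j) l) k p = pdx (pdy (pdyy Ft i j) k) l p :=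
      dir_comm hs (hF2 i j) _ _ hp
    have e2 : pdy (pdx (pdyy Ft i k) l) j p = pdx (pdy (pdyy Ft i k) j) l p :=
      dir_comm hs (hF2 i k) _ _ hp
    rw [e1, e2]
    exact dir_congr hs (s3'' i j k) _ hp
  have sy : ∀ l, pdy (pdy (pdyy Ft i j) l) k p = pdy (pdy (pdyy Ft i k) l) j p := by
    intro l
    have e1 : pdy (pdy (pdyy Ft i j) l) k p = pdy (pdy (pdyy Ft i j) k) l p :=
      dir_comm hs (hF2 i j) _ _ hp
    have e2 : pdy (pdy (pdyy Ft i k) l) j p = pdy (pdy (pdyy Ft i k) j) l p :=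
      dir_comm hs (hF2 i k) _ _ hp
    rw [e1, e2]
    exact dir_congr hs (s3'' i j k) _ hp
  have hz : ∀ a b c, pdy (nablaT G (pdyy Ft) a b) c p = 0 := by
    intro a b c
    have := dir_congr hs (h a b) (0, Pi.single c 1) hp
    unfold pdy at this ⊢
    rw [this]; simp
  have E1 := (pdy_nabla hs hGs hF2 i j k hp).symm.trans (hz i j k)
  have E2 := (pdy_nabla hs hGs hF2 i k j hp).symm.trans (hz i k j)
  obtain ⟨D1, H1⟩ := pdy_deltax hs hGs (hF1 j) i k hp
  obtain ⟨D2, H2⟩ := pdy_deltax hs hGs (hF1 k) i j hp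
  rw [pdy_sub D1 D2, H1, H2]
  change pdx (pdyy Ft i j) k p - ∑ l, (pdy (Ncoef G l k) i p * pdyy Ft l j p
      + Ncoef G l k p * pdy (pdyy Ft l j) i p)
    - (pdx (pdyy Ft i k) j p - ∑ l, (pdy (Ncoef G l j) i p * pdyy Ft l k p
      + Ncoef G l j p * pdy (pdyy Ft l k) i p)) = 0
  rw [← sub_eq_zero.mpr (E1.trans E2.symm), sub_sub_sub_comm, add_sub_add_comm,
    ← Finset.sum_sub_distrib, ← Finset.sum_sub_distrib, sub_eq_add_neg, ← Finset.sum_neg_distrib]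
  congr 1
  refine Finset.sum_congr rfl fun l _ => ?_
  rw [sx l, sy l, sN l i k, sN l i j, sN l k j, s3 l j i p hp, s3 l k i p hp,
    s3'' l j k p hp, s3'' i l k p hp, s3'' i l j p hp]
  ring
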